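/- Let f : A → A be an area preserving reversible homeomorphism of the closed annulus A which is isotopic to the identity. If f has an odd-periodic point (some z ∈ A and odd integer k ≥ 1 with f^k(z) = z), then f has an interior symmetric odd-periodic point, i.e., a point z in the interior Å with f^k(z) = z for some odd k ≥ 1 and f^ℓ(z) = I(z) for some integer ℓ ≥ 1. -/

import Mathlib

open MeasureTheory Set

noncomputable section

/-- The reflection `I(x,y) = (-x,y)` on the plane. -/
def refl2 : ℝ × ℝ → ℝ × ℝ := fun p => (-p.1, p.2)

/-- The Euclidean norm `|z| = √(x² + y²)` on `ℝ²`. -/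
def enorm2 (p : ℝ × ℝ) : ℝ := Real.sqrt (p.1 ^ 2 + p.2 ^ 2)

/-- The closed annulus `A = {z : 1 ≤ |z| ≤ 2}`. -/
def annulus : Set (ℝ × ℝ) := {p | 1 ≤ enorm2 p ∧ enorm2 p ≤ 2}

/-- The open annulus `Å = {z : 1 < |z| < 2}`, the interior of `A`. -/
def annulusInt : Set (ℝ × ℝ) := {p | 1 < enorm2 p ∧ enorm2 p < 2}

lemma enorm2_refl2 (p : ℝ × ℝ) : enorm2 (refl2 p) = enorm2 p := by
  simp [enorm2, refl2, neg_sq]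

lemma refl2_mem_annulus {p : ℝ × ℝ} (h : p ∈ annulus) : refl2 p ∈ annulus := by
  simpa [annulus, enorm2_refl2] using h

/-- The restriction `I_A` of the reflection to the closed annulus. -/
def IA : annulus → annulus := fun z => ⟨refl2 z, refl2_mem_annulus z.2⟩

/-- A self-homeomorphism `f` of a set `Ω ⊆ ℝ²` is isotopic to the identity:
there is a continuous `H : [0,1] × Ω → Ω` such that each `H(s,·)` is a
homeomorphism of `Ω`, `H(0,·) = id` and `H(1,·) = f`. -/
def IsotopicToId {Ω : Set (ℝ × ℝ)} (f : Ω ≃ₜ Ω) : Prop :=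
  ∃ H : (Set.Icc (0:ℝ) 1) × Ω → Ω, Continuous H ∧
    (∀ s, ∃ e : Ω ≃ₜ Ω, ∀ z, H (s, z) = e z) ∧
    (∀ z, H (⟨0, by norm_num⟩, z) = z) ∧
    (∀ z, H (⟨1, by norm_num⟩, z) = f z)

open scoped unitInterval ComplexConjugate

/-! ### Logarithms of nonvanishing maps on a square -/

lemma exists_continuous_log {D : I × I → ℂ} (hD : Continuous D) (h0 : ∀ p, D p ≠ 0) :
    ∃ L : I × I → ℂ, Continuous L ∧ ∀ p, Complex.exp (L p) = D p := by
  let D' : C(I × I, {z : ℂ // z ≠ 0}) := ⟨fun p => ⟨D p, h0 p⟩, by fun_prop⟩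
  let γ : C(I, {z : ℂ // z ≠ 0}) := ⟨fun t => D' (0, t), by fun_prop⟩
  obtain ⟨Γ, hΓ, -⟩ := Complex.isCoveringMap_exp.exists_path_lifts γ (Complex.log (D (0, 0)))
    (Subtype.ext (Complex.exp_log (h0 _)).symm)
  refine ⟨Complex.isCoveringMap_exp.liftHomotopy D' Γ (fun a => (congrFun hΓ a).symm),
    ContinuousMap.continuous _, fun p => ?_⟩
  exact congrArg Subtype.val
    (congrFun (Complex.isCoveringMap_exp.liftHomotopy_lifts D' Γ fun a => (congrFun hΓ a).symm) p)

lemma eq_of_exp_eq_const {X : Type*} [TopologicalSpace X] [PreconnectedSpace X] {h : X → ℂ}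
    (hc : Continuous h) {c : ℂ} (he : ∀ s, Complex.exp (h s) = c) (a b : X) : h a = h b :=
  Complex.isCoveringMap_exp.const_of_comp hc
    (fun s t => Subtype.ext ((he s).trans (he t).symm)) a b

/-- A homotopy of antiperiodic nonvanishing paths cannot join a path to its complex conjugate. -/
lemma false_of_antiperiodic_homotopy_conj {D : I × I → ℂ} (hD : Continuous D)
    (h0 : ∀ p, D p ≠ 0) (hanti : ∀ s, D (s, 1) = -D (s, 0))
    (hconj : ∀ t, D (0, t) = conj (D (1, t))) : False := by
  obtain ⟨L, hL, hexp⟩ := exists_continuous_log hD h0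
  have hs : ∀ s, Complex.exp (L (s, 1) - L (s, 0)) = -1 := fun s => by
    rw [Complex.exp_sub, hexp, hexp, hanti, neg_div, div_self (h0 _)]
  have h1 := eq_of_exp_eq_const (h := fun s : I => L (s, 1) - L (s, 0)) (by fun_prop) hs 0 1
  have ht : ∀ t, Complex.exp (conj (L (0, t)) - L (1, t)) = 1 := fun t => by
    rw [Complex.exp_sub, Complex.exp_conj, hexp, hexp, hconj, Complex.conj_conj, div_self (h0 _)]
  have h2 := eq_of_exp_eq_const (h := fun t : I => conj (L (0, t)) - L (1, t))
    (by fun_prop) ht 0 1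
  have h3 : conj (L (0, 1) - L (0, 0)) = L (0, 1) - L (0, 0) := by
    simp only [map_sub] at *
    linear_combination -h2 - h1
  obtain ⟨r, hr⟩ := Complex.conj_eq_iff_real.1 h3
  have h4 := hs 0
  rw [hr, ← Complex.ofReal_exp] at h4
  have h5 : Real.exp r = -1 := by exact_mod_cast h4
  linarith [Real.exp_pos r]

/-- A small circle around the origin is not homotopic, through nonvanishing loops, to a loop in a
closed half plane. -/
lemma false_of_circle_homotopy_halfPlane {D : I × I → ℂ} (hD : Continuous D)
    (h0 : ∀ p, D p ≠ 0) (hloop : ∀ s, D (s, 1) = D (s, 0)) {ε : ℝ}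
    (hcirc : ∀ t : I, D (0, t) = ε * Complex.exp (2 * Real.pi * (t : ℝ) * Complex.I))
    {a : ℂ} (ha : a ≠ 0) (hhalf : ∀ t, 0 ≤ (a * D (1, t)).re) : False := by
  obtain ⟨L, hL, hexp⟩ := exists_continuous_log hD h0
  have hs : ∀ s, Complex.exp (L (s, 1) - L (s, 0)) = 1 := fun s => by
    rw [Complex.exp_sub, hexp, hexp, hloop, div_self (h0 _)]
  have h1 := eq_of_exp_eq_const (h := fun s : I => L (s, 1) - L (s, 0)) (by fun_prop) hs 0 1
  have h2 := eq_of_exp_eq_const (c := ε)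
    (h := fun t : I => L (0, t) - 2 * Real.pi * (t : ℝ) * Complex.I) (by fun_prop)
    (fun t => by
      rw [Complex.exp_sub, hexp, hcirc, mul_div_assoc, div_self (Complex.exp_ne_zero _), mul_one])
    0 1
  have hslit : ∀ t, a * D (1, t) ∈ Complex.slitPlane := fun t => by
    rw [Complex.mem_slitPlane_iff]
    rcases (hhalf t).lt_or_eq with h | h
    · exact Or.inl h
    · exact Or.inr fun him => mul_ne_zero ha (h0 (1, t)) (Complex.ext h.symm him)
  have hlog : Continuous fun t : I => Complex.log (a * D (1, t)) :=
    Continuous.clog (by fun_prop) hslit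
  have h3 := eq_of_exp_eq_const (c := a⁻¹)
    (h := fun t : I => L (1, t) - Complex.log (a * D (1, t))) (by fun_prop)
    (fun t => by
      rw [Complex.exp_sub, hexp, Complex.exp_log (mul_ne_zero ha (h0 _))]
      field_simp [h0 (1, t)])
    0 1
  simp only [hloop, Set.Icc.coe_zero, Set.Icc.coe_one, Complex.ofReal_zero,
    Complex.ofReal_one] at h1 h2 h3
  have h4 : (2 * Real.pi * Complex.I : ℂ) = 0 := by linear_combination h1 + h2 - h3
  exact Complex.two_pi_I_ne_zero h4

/-! ### Polar coordinates on the annulus -/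

/-- `x` is an angle of `z`, measured from the positive vertical axis. -/
def IsAngle (x : ℝ) (z : annulus) : Prop :=
  (z : ℝ × ℝ) = (enorm2 z * Real.sin x, enorm2 z * Real.cos x)

/-- The point of the annulus with angle `x` and radius `r`, where `r` is clamped to `[1, 2]`. -/
def polar (x r : ℝ) : annulus :=
  ⟨(projIcc (1 : ℝ) 2 one_le_two r * Real.sin x, projIcc (1 : ℝ) 2 one_le_two r * Real.cos x), by
    have h := (projIcc (1 : ℝ) 2 one_le_two r).2
    have : enorm2 (projIcc (1 : ℝ) 2 one_le_two r * Real.sin x,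
        projIcc (1 : ℝ) 2 one_le_two r * Real.cos x) = projIcc (1 : ℝ) 2 one_le_two r := by
      rw [enorm2, mul_pow, mul_pow, ← mul_add, Real.sin_sq_add_cos_sq, mul_one,
        Real.sqrt_sq (by linarith [h.1])]
    exact ⟨h.1.trans_eq this.symm, this.trans_le h.2⟩⟩

lemma enorm2_pos (z : annulus) : 0 < enorm2 z := zero_lt_one.trans_le z.2.1

lemma continuous_enorm2 : Continuous enorm2 := by unfold enorm2; fun_prop

lemma continuous_polar : Continuous fun p : ℝ × ℝ => polar p.1 p.2 := by
  unfold polar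
  have : Continuous fun p : ℝ × ℝ => (projIcc (1 : ℝ) 2 one_le_two p.2 : ℝ) :=
    continuous_subtype_val.comp (continuous_projIcc.comp continuous_snd)
  fun_prop

lemma coe_polar (x : ℝ) {r : ℝ} (hr : r ∈ Icc (1 : ℝ) 2) :
    (polar x r : ℝ × ℝ) = (r * Real.sin x, r * Real.cos x) := by
  simp [polar, projIcc_of_mem one_le_two hr]

lemma enorm2_polar (x : ℝ) {r : ℝ} (hr : r ∈ Icc (1 : ℝ) 2) : enorm2 (polar x r) = r := by
  rw [coe_polar x hr, enorm2, mul_pow, mul_pow, ← mul_add,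
    Real.sin_sq_add_cos_sq, mul_one, Real.sqrt_sq (by linarith [hr.1])]

lemma isAngle_polar (x : ℝ) {r : ℝ} (hr : r ∈ Icc (1 : ℝ) 2) : IsAngle x (polar x r) := by
  rw [IsAngle, enorm2_polar x hr, coe_polar x hr]

lemma IsAngle.eq_of_enorm2_eq {x : ℝ} {z z' : annulus} (h : IsAngle x z) (h' : IsAngle x z')
    (hr : enorm2 z = enorm2 z') : z = z' := by
  rw [IsAngle] at h h'
  rw [Subtype.ext_iff, h, h', hr]

lemma IsAngle.polar_eq {x : ℝ} {z : annulus} (h : IsAngle x z) : polar x (enorm2 z) = z :=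
  (isAngle_polar x z.2).eq_of_enorm2_eq h (enorm2_polar x z.2)

lemma IsAngle.add_int {x : ℝ} {z : annulus} (h : IsAngle x z) (j : ℤ) :
    IsAngle (x + j * (2 * Real.pi)) z := by
  rw [IsAngle, Real.sin_add_int_mul_two_pi, Real.cos_add_int_mul_two_pi]
  exact h

lemma IsAngle.exists_int {x y : ℝ} {z : annulus} (h : IsAngle x z) (h' : IsAngle y z) :
    ∃ j : ℤ, y = x + j * (2 * Real.pi) := by
  rw [IsAngle, Prod.ext_iff] at h h'
  have hz := (enorm2_pos z).ne'
  have hs : Real.sin y = Real.sin x := mul_left_cancel₀ hz (h'.1.symm.trans h.1)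
  have hc : Real.cos y = Real.cos x := mul_left_cancel₀ hz (h'.2.symm.trans h.2)
  obtain ⟨j, hj⟩ := (Real.Angle.angle_eq_iff_two_pi_dvd_sub).1 (Real.Angle.cos_sin_inj hc hs)
  exact ⟨j, by linarith⟩

/-- The argument of a point, measured from the positive vertical axis. -/
def annulusArg (z : annulus) : ℝ := Complex.arg ⟨(z : ℝ × ℝ).2, (z : ℝ × ℝ).1⟩

lemma isAngle_annulusArg (z : annulus) : IsAngle (annulusArg z) z := by
  have hn : ‖(⟨(z : ℝ × ℝ).2, (z : ℝ × ℝ).1⟩ : ℂ)‖ = enorm2 z := by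
    rw [Complex.norm_eq_sqrt_sq_add_sq, enorm2, add_comm]
  rw [IsAngle, annulusArg, ← hn, Complex.norm_mul_cos_arg, Complex.norm_mul_sin_arg]

lemma exists_isAngle (z : annulus) : ∃ x, IsAngle x z := ⟨_, isAngle_annulusArg z⟩

/-- Every point has an angle in any prescribed half-open interval of length `2π`. -/
lemma exists_isAngle_mem_Ico (z : annulus) (a : ℝ) :
    ∃ x ∈ Ico a (a + 2 * Real.pi), IsAngle x z := by
  refine ⟨_, toIcoMod_mem_Ico Real.two_pi_pos a (annulusArg z), ?_⟩
  have := (isAngle_annulusArg z).add_int (-toIcoDiv Real.two_pi_pos a (annulusArg z))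
  rwa [Int.cast_neg, neg_mul, ← sub_eq_add_neg, ← zsmul_eq_mul, self_sub_toIcoDiv_zsmul] at this

@[simp] lemma enorm2_IA (z : annulus) : enorm2 (IA z) = enorm2 z := enorm2_refl2 _

@[simp] lemma IA_IA (z : annulus) : IA (IA z) = z := Subtype.ext (by simp [IA, refl2])

lemma continuous_IA : Continuous IA := by unfold IA refl2; fun_prop

lemma IsAngle.neg {x : ℝ} {z : annulus} (h : IsAngle x z) : IsAngle (-x) (IA z) := by
  rw [IsAngle, enorm2_IA, Real.sin_neg, Real.cos_neg]
  rw [IsAngle, Prod.ext_iff] at h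
  ext
  · simpa [IA, refl2] using h.1
  · simpa [IA, refl2] using h.2

lemma IA_polar_zero {r : ℝ} (hr : r ∈ Icc (1 : ℝ) 2) : IA (polar 0 r) = polar 0 r := by
  have h := (isAngle_polar 0 hr).neg
  rw [neg_zero] at h
  exact h.eq_of_enorm2_eq (isAngle_polar 0 hr) (enorm2_IA _)

lemma preconnectedSpace_annulus : PreconnectedSpace annulus := by
  refine ⟨?_⟩
  have : range (fun p : ℝ × ℝ => polar p.1 p.2) = univ := eq_univ_of_forall fun z =>
    ⟨(annulusArg z, enorm2 z), (isAngle_annulusArg z).polar_eq⟩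
  rw [← this]
  exact isPreconnected_range continuous_polar

/-! ### Lifts of isotopies to the universal cover -/

/-- The unit complex number whose argument is the angle of a point. -/
def direction (z : annulus) : Circle :=
  ⟨⟨(z : ℝ × ℝ).2 / enorm2 z, (z : ℝ × ℝ).1 / enorm2 z⟩, by
    have hz := enorm2_pos z
    rw [Submonoid.unitSphere, Submonoid.mem_mk, Subsemigroup.mem_mk, mem_sphere_zero_iff_norm,
      Complex.norm_eq_sqrt_sq_add_sq, Real.sqrt_eq_one, div_pow, div_pow, ← add_div,
      div_eq_one_iff_eq (by positivity), enorm2, Real.sq_sqrt (by positivity), add_comm]⟩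

lemma continuous_direction : Continuous direction := by
  have h : Continuous fun z : annulus => enorm2 z := continuous_enorm2.comp continuous_subtype_val
  refine Continuous.subtype_mk ?_ _
  refine Complex.equivRealProdCLM.symm.continuous.comp (Continuous.prodMk ?_ ?_)
  · exact (continuous_snd.comp continuous_subtype_val).div h fun z => (enorm2_pos z).ne'
  · exact (continuous_fst.comp continuous_subtype_val).div h fun z => (enorm2_pos z).ne'

lemma isAngle_iff_direction {x : ℝ} {z : annulus} : IsAngle x z ↔ direction z = Circle.exp x := by
  have hz := (enorm2_pos z).ne'
  rw [Circle.ext_iff, Circle.coe_exp, Complex.exp_mul_I, Complex.ext_iff, IsAngle, Prod.ext_iff,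
    and_comm]
  simp only [direction, Complex.add_re, Complex.add_im, ← Complex.ofReal_cos, ← Complex.ofReal_sin,
    Complex.mul_re, Complex.mul_im, Complex.ofReal_re, Complex.ofReal_im, Complex.I_re,
    Complex.I_im, mul_zero, mul_one, zero_add, add_zero, sub_zero, div_eq_iff hz,
    mul_comm (enorm2 _)]

/-- `G` is a continuous family of injective maps of the annulus starting at the identity, and `D`
records the angular displacement along this family, that is, a lift of it to the universal cover. -/
structure IsLiftedIsotopy (G : I × annulus → annulus) (D : I × annulus → ℝ) : Prop where
  continuous_map : Continuous G
  continuous_disp : Continuous D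
  injective : ∀ s, Function.Injective fun z => G (s, z)
  map_zero : ∀ z, G (0, z) = z
  disp_zero : ∀ z, D (0, z) = 0
  isAngle : ∀ s z x, IsAngle x z → IsAngle (x + D (s, z)) (G (s, z))

/-- `g` is the end of an isotopy from the identity whose lift has final angular displacement `d`. -/
def IsLiftPair (g : annulus → annulus) (d : annulus → ℝ) : Prop :=
  ∃ G D, IsLiftedIsotopy G D ∧ (∀ z, G (1, z) = g z) ∧ ∀ z, D (1, z) = d z

lemma IsotopicToId.exists_isLiftPair {f : annulus ≃ₜ annulus} (hf : IsotopicToId f) :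
    ∃ d, IsLiftPair f d := by
  obtain ⟨H, hH, he, h0, h1⟩ := hf
  let R : C(I × annulus, Circle) := ⟨fun p => direction (H p) / direction p.2,
    (continuous_direction.comp hH).div' (continuous_direction.comp continuous_snd)⟩
  have hR : ∀ z, R (0, z) = Circle.exp ((ContinuousMap.const annulus (0 : ℝ)) z) := fun z => by
    have : H (0, z) = z := h0 z
    simp [R, this]
  let D := Circle.isCoveringMap_exp.liftHomotopy R (.const _ 0) hR
  have hD : ∀ p, Circle.exp (D p) = direction (H p) / direction p.2 :=
    fun p => congrFun (Circle.isCoveringMap_exp.liftHomotopy_lifts R (.const _ 0) hR) p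
  refine ⟨fun z => D (1, z), H, D, ⟨hH, D.continuous, fun s => ?_, h0,
    Circle.isCoveringMap_exp.liftHomotopy_zero R (.const _ 0) hR, fun s z x hx => ?_⟩, h1,
    fun _ => rfl⟩
  · obtain ⟨e, he⟩ := he s
    simpa only [he] using e.injective
  · rw [isAngle_iff_direction] at hx ⊢
    rw [Circle.exp_add, hD, ← hx, mul_div_cancel]

namespace IsLiftPair

variable {g g' : annulus → annulus} {d d' : annulus → ℝ}

lemma continuous_map (h : IsLiftPair g d) : Continuous g := by
  obtain ⟨G, D, hG, hg, -⟩ := h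
  rw [← funext hg]
  exact hG.continuous_map.comp (by fun_prop)

lemma continuous_disp (h : IsLiftPair g d) : Continuous d := by
  obtain ⟨G, D, hG, -, hd⟩ := h
  rw [← funext hd]
  exact hG.continuous_disp.comp (by fun_prop)

lemma isAngle (h : IsLiftPair g d) {z : annulus} {x : ℝ} (hx : IsAngle x z) :
    IsAngle (x + d z) (g z) := by
  obtain ⟨G, D, hG, hg, hd⟩ := h
  rw [← hg, ← hd]
  exact hG.isAngle 1 z x hx

lemma comp (h : IsLiftPair g d) (h' : IsLiftPair g' d') :
    IsLiftPair (g ∘ g') (fun z => d' z + d (g' z)) := by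
  obtain ⟨G, D, hG, hg, hd⟩ := h
  obtain ⟨G', D', hG', hg', hd'⟩ := h'
  have := hG.continuous_map
  have := hG'.continuous_map
  have := hG.continuous_disp
  have := hG'.continuous_disp
  refine ⟨fun p => G (p.1, G' p), fun p => D' p + D (p.1, G' p), ⟨by fun_prop, by fun_prop,
    fun s => (hG.injective s).comp (hG'.injective s), fun z => ?_, fun z => ?_,
    fun s z x hx => ?_⟩, fun z => ?_, fun z => ?_⟩
  · simp [hG.map_zero, hG'.map_zero]
  · simp [hG.disp_zero, hG'.disp_zero]
  · rw [← add_assoc]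
    exact hG.isAngle _ _ _ (hG'.isAngle _ _ _ hx)
  · simp [hg, hg']
  · simp [hd, hg', hd']

lemma refl : IsLiftPair id fun _ => 0 :=
  ⟨fun p => p.2, fun _ => 0, ⟨by fun_prop, by fun_prop, fun _ _ _ h => h, fun _ => rfl,
    fun _ => rfl, fun _ _ _ hx => by simpa using hx⟩, fun _ => rfl, fun _ => rfl⟩

lemma iterate (h : IsLiftPair g d) (n : ℕ) :
    IsLiftPair g^[n] (fun z => ∑ i ∈ Finset.range n, d (g^[i] z)) := by
  induction n with
  | zero => simpa using refl
  | succ n ih =>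
    simp only [Finset.sum_range_succ, Function.iterate_succ']
    exact h.comp ih

/-- The full rotation by `j` turns. -/
lemma turns (j : ℤ) : IsLiftPair id fun _ => j * (2 * Real.pi) := by
  let ρ : ℝ → ℝ × ℝ → ℝ × ℝ := fun t z =>
    (z.1 * Real.cos t + z.2 * Real.sin t, z.2 * Real.cos t - z.1 * Real.sin t)
  have hn : ∀ t z, enorm2 (ρ t z) = enorm2 z := fun t z => by
    simp only [enorm2, ρ]
    congr 1
    linear_combination (z.1 ^ 2 + z.2 ^ 2) * Real.sin_sq_add_cos_sq t
  have hm : ∀ t (z : annulus), ρ t z ∈ annulus := fun t z =>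
    ⟨(hn t z).symm ▸ z.2.1, (hn t z).symm ▸ z.2.2⟩
  have ha : ∀ t (z : annulus) x, IsAngle x z → IsAngle (x + t) ⟨ρ t z, hm t z⟩ :=
    fun t z x hx => by
      rw [IsAngle, Prod.ext_iff] at *
      simp only [hn, Real.sin_add, Real.cos_add] at *
      simp only [ρ]
      constructor
      · linear_combination Real.cos t * hx.1 + Real.sin t * hx.2
      · linear_combination Real.cos t * hx.2 - Real.sin t * hx.1
  refine ⟨fun p => ⟨ρ (p.1 * (j * (2 * Real.pi))) p.2, hm _ _⟩,
    fun p => p.1 * (j * (2 * Real.pi)), ⟨by fun_prop, by fun_prop, fun s z z' h => ?_,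
    fun z => ?_, fun z => ?_, fun s z x hx => ha _ _ _ hx⟩, fun z => ?_, fun z => ?_⟩
  · have h' := congrArg (fun w => ρ (-(s * (j * (2 * Real.pi)))) (Subtype.val w)) h
    have hinv : ∀ t z, ρ (-t) (ρ t z) = z := fun t z => by
      simp only [ρ, Real.cos_neg, Real.sin_neg]
      ext
      · linear_combination z.1 * Real.sin_sq_add_cos_sq t
      · linear_combination z.2 * Real.sin_sq_add_cos_sq t
    simpa only [hinv, Subtype.ext_iff] using h'
  · simp [ρ]
  · simp
  · obtain ⟨x, hx⟩ := exists_isAngle z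
    refine (ha _ z x hx).eq_of_enorm2_eq ?_ (hn _ _)
    simpa using hx.add_int j
  · simp

lemma add_turns (h : IsLiftPair g d) (j : ℤ) : IsLiftPair g fun z => d z + j * (2 * Real.pi) := by
  simpa [add_comm] using h.comp (turns j)

lemma conj_IA (h : IsLiftPair g d) :
    IsLiftPair (fun z => IA (g (IA z))) fun z => -d (IA z) := by
  obtain ⟨G, D, hG, hg, hd⟩ := h
  have := hG.continuous_map
  have := hG.continuous_disp
  have := continuous_IA
  refine ⟨fun p => IA (G (p.1, IA p.2)), fun p => -D (p.1, IA p.2), ⟨by fun_prop, by fun_prop,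
    fun s z z' hz => ?_, fun z => ?_, fun z => ?_, fun s z x hx => ?_⟩, fun z => ?_, fun z => ?_⟩
  · have hI : Function.Injective IA := Function.LeftInverse.injective IA_IA
    exact hI (hG.injective s (hI hz))
  · simp [hG.map_zero]
  · simp [hG.disp_zero]
  · have := (hG.isAngle s _ _ hx.neg).neg
    rwa [neg_add, neg_neg] at this
  · simp [hg]
  · simp [hd]

end IsLiftPair

/-! ### The lifted isotopy on the strip -/

/-- The lift of `G` with displacement `D` to the strip, in the coordinates `angle + i * radius`. -/
def coverMap (G : I × annulus → annulus) (D : I × annulus → ℝ) (s : I) (x r : ℝ) : ℂ :=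
  ⟨x + D (s, polar x r), enorm2 (G (s, polar x r))⟩

namespace IsLiftedIsotopy

variable {G : I × annulus → annulus} {D : I × annulus → ℝ}

lemma continuous_coverMap (h : IsLiftedIsotopy G D) :
    Continuous fun p : I × ℝ × ℝ => coverMap G D p.1 p.2.1 p.2.2 := by
  have := h.continuous_map
  have := h.continuous_disp
  have := continuous_enorm2
  have hp : Continuous fun p : I × ℝ × ℝ => polar p.2.1 p.2.2 :=
    continuous_polar.comp continuous_snd
  exact Complex.equivRealProdCLM.symm.continuous.comp
    (f := fun p : I × ℝ × ℝ => (p.2.1 + D (p.1, polar p.2.1 p.2.2),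
      enorm2 (G (p.1, polar p.2.1 p.2.2)))) (by fun_prop)

lemma coverMap_zero (h : IsLiftedIsotopy G D) (x : ℝ) {r : ℝ} (hr : r ∈ Icc (1 : ℝ) 2) :
    coverMap G D 0 x r = ⟨x, r⟩ := by
  rw [coverMap, h.map_zero, h.disp_zero, enorm2_polar x hr, add_zero]

lemma coverMap_injective (h : IsLiftedIsotopy G D) {s : I} {x x' r r' : ℝ}
    (hr : r ∈ Icc (1 : ℝ) 2) (hr' : r' ∈ Icc (1 : ℝ) 2)
    (heq : coverMap G D s x r = coverMap G D s x' r') : x = x' ∧ r = r' := by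
  obtain ⟨h1, h2⟩ := Complex.ext_iff.1 heq
  simp only [coverMap] at h1 h2
  have ha := h.isAngle s _ _ (isAngle_polar x hr)
  have ha' := h.isAngle s _ _ (isAngle_polar x' hr')
  rw [← h1] at ha'
  have hz := h.injective s (ha.eq_of_enorm2_eq ha' h2)
  rw [hz] at h1
  exact ⟨add_right_cancel h1, by rw [← enorm2_polar x hr, hz, enorm2_polar x' hr']⟩

end IsLiftedIsotopy

namespace IsLiftPair

variable {g : annulus → annulus} {d : annulus → ℝ}

lemma mem_annulusInt (h : IsLiftPair g d) {z : annulus} (hz : (z : ℝ × ℝ) ∈ annulusInt) :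
    (g z : ℝ × ℝ) ∈ annulusInt := by
  obtain ⟨G, D, hG, hg, -⟩ := h
  obtain ⟨x, hx⟩ := exists_isAngle z
  obtain ⟨hz1, hz2⟩ := hz
  set r := enorm2 z with hr
  obtain ⟨ε, hε, hε1, hε2⟩ : ∃ ε > 0, ε ≤ r - 1 ∧ ε ≤ 2 - r :=
    ⟨min (r - 1) (2 - r), lt_min (by linarith) (by linarith), min_le_left _ _, min_le_right _ _⟩
  let X : I → ℝ := fun t => x + ε * Real.cos (2 * Real.pi * t)
  let Y : I → ℝ := fun t => r + ε * Real.sin (2 * Real.pi * t)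
  have hY : ∀ t, Y t ∈ Icc (1 : ℝ) 2 := fun t => by
    have h1 := Real.neg_one_le_sin (2 * Real.pi * t)
    have h2 := Real.sin_le_one (2 * Real.pi * t)
    constructor <;> simp only [Y] <;> nlinarith
  have hr' : r ∈ Icc (1 : ℝ) 2 := z.2
  let E : I × I → ℂ := fun p => coverMap G D p.1 (X p.2) (Y p.2) - coverMap G D p.1 x r
  have hE : Continuous E :=
    (hG.continuous_coverMap.comp (f := fun p : I × I => (p.1, X p.2, Y p.2))
      (by fun_prop)).sub
    (hG.continuous_coverMap.comp (f := fun p : I × I => (p.1, x, r)) (by fun_prop))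
  have hE0 : ∀ p, E p ≠ 0 := fun p hp => by
    obtain ⟨h1, h2⟩ := hG.coverMap_injective (hY p.2) hr' (sub_eq_zero.1 hp)
    have hc : Real.cos (2 * Real.pi * p.2) = 0 := by
      simpa [X, hε.ne'] using h1
    have hs : Real.sin (2 * Real.pi * p.2) = 0 := by
      simpa [Y, hε.ne'] using h2
    simpa [hc, hs] using Real.sin_sq_add_cos_sq (2 * Real.pi * p.2)
  have hloop : ∀ s, E (s, 1) = E (s, 0) := fun s => by simp [E, X, Y]
  have hcirc : ∀ t : I, E (0, t) = ε * Complex.exp (2 * Real.pi * (t : ℝ) * Complex.I) :=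
    fun t => by
      simp only [E, hG.coverMap_zero _ (hY t), hG.coverMap_zero _ hr', X, Y]
      have : (2 * Real.pi * (t : ℝ) * Complex.I : ℂ) = (2 * Real.pi * t : ℝ) * Complex.I := by
        push_cast; ring
      rw [this]
      apply Complex.ext
      · rw [Complex.re_ofReal_mul, Complex.exp_ofReal_mul_I_re]
        simp
      · rw [Complex.im_ofReal_mul, Complex.exp_ofReal_mul_I_im]
        simp
  have him : ∀ t, (E (1, t)).im = enorm2 (G (1, polar (X t) (Y t))) - enorm2 (g z) := fun t => by
    simp [E, coverMap, hx.polar_eq, hr, hg]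
  refine ⟨(g z).2.1.lt_of_ne fun h1 => ?_, (g z).2.2.lt_of_ne fun h2 => ?_⟩
  · refine false_of_circle_homotopy_halfPlane hE hE0 hloop hcirc (a := -Complex.I) (by simp) ?_
    intro t
    have := (G (1, polar (X t) (Y t))).2.1
    simp only [Complex.mul_re, Complex.neg_re, Complex.neg_im, Complex.I_re, Complex.I_im, him]
    linarith
  · refine false_of_circle_homotopy_halfPlane hE hE0 hloop hcirc (a := Complex.I) (by simp) ?_
    intro t
    have := (G (1, polar (X t) (Y t))).2.2
    simp only [Complex.mul_re, Complex.I_re, Complex.I_im, him]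
    linarith

end IsLiftPair

/-! ### Reversible lifts -/

lemma pos_of_ne_zero_of_isPreconnected {X : Type*} [TopologicalSpace X] {S : Set X}
    (hS : IsPreconnected S) {φ : X → ℝ} (hφ : ContinuousOn φ S) (h0 : ∀ x ∈ S, φ x ≠ 0)
    {a b : X} (ha : a ∈ S) (hpos : 0 < φ a) (hb : b ∈ S) : 0 < φ b := by
  by_contra! hle
  obtain ⟨c, hc, hc0⟩ := hS.intermediate_value hb ha hφ ⟨hle, hpos.le⟩
  exact h0 c hc hc0

/-- A lift pair whose map `g` is reversible. -/
structure IsReversibleLift (g : annulus → annulus) (d : annulus → ℝ) : Prop where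
  lift : IsLiftPair g d
  map_IA_map : ∀ z, g (IA (g z)) = IA z

namespace IsReversibleLift

variable {g : annulus → annulus} {d : annulus → ℝ}

lemma disp_IA_map (h : IsReversibleLift g d) (z : annulus) : d (IA (g z)) = d z := by
  have := preconnectedSpace_annulus
  have hg := h.lift.continuous_map
  have hd := h.lift.continuous_disp
  have hI := continuous_IA
  have hconst := eq_of_exp_eq_const (c := 1)
    (h := fun z => ((d (IA (g z)) - d z : ℝ) : ℂ) * Complex.I) (by fun_prop) (fun z => by
      obtain ⟨x, hx⟩ := exists_isAngle z
      have h1 := h.lift.isAngle (h.lift.isAngle hx).neg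
      rw [h.map_IA_map] at h1
      obtain ⟨j, hj⟩ := hx.neg.exists_int h1
      rw [Complex.exp_eq_one_iff]
      refine ⟨j, ?_⟩
      rw [show d (IA (g z)) - d z = j * (2 * Real.pi) by linarith]
      push_cast
      ring) z (IA (g z))
  have h2 := congrArg Complex.im hconst
  simp only [h.map_IA_map, IA_IA, Complex.im_ofReal_mul, Complex.I_im, mul_one] at h2
  linarith

/-- If `g` has no fixed point on the open segment of angle `0`, then its lift does not map a point
of this segment to a point of this segment. -/
lemma disp_polar_zero_ne_zero (h : IsReversibleLift g d)
    (hfix : ∀ r ∈ Ioo (1 : ℝ) 2, g (polar 0 r) ≠ polar 0 r) {r : ℝ} (hr : r ∈ Ioo (1 : ℝ) 2) :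
    d (polar 0 r) ≠ 0 := fun hd0 => by
  have hrI := Ioo_subset_Icc_self hr
  set r' := enorm2 (g (polar 0 r)) with hr'
  have hr'm : r' ∈ Ioo (1 : ℝ) 2 := h.lift.mem_annulusInt (z := polar 0 r) (by
    rw [annulusInt, mem_ofPred_eq, enorm2_polar 0 hrI]; exact hr)
  have hr'I := Ioo_subset_Icc_self hr'm
  have hgr : g (polar 0 r) = polar 0 r' := by
    have := h.lift.isAngle (isAngle_polar 0 hrI)
    rw [hd0, add_zero] at this
    exact this.polar_eq.symm
  have hgr' : g (polar 0 r') = polar 0 r := by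
    have := h.map_IA_map (polar 0 r)
    rwa [hgr, IA_polar_zero hr'I, IA_polar_zero hrI] at this
  have hd0' : d (polar 0 r') = 0 := by
    have := h.disp_IA_map (polar 0 r)
    rwa [hgr, IA_polar_zero hr'I, hd0] at this
  have hcg := h.lift.continuous_map
  have hcd := h.lift.continuous_disp
  have hce := continuous_enorm2
  obtain ⟨G, D, hG, hg, hd⟩ := id h.lift
  let ρ : I → ℝ := fun t => (1 - t) * r + t * r'
  have hρ : ∀ t, ρ t ∈ Ioo (1 : ℝ) 2 := fun t =>
    convex_Ioo (1 : ℝ) 2 hr hr'm (sub_nonneg.2 t.2.2) t.2.1 (by ring)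
  have hρI := fun t => Ioo_subset_Icc_self (hρ t)
  have hcρ : Continuous ρ := by fun_prop
  let seg : I → annulus := fun t => polar 0 (ρ t)
  have hcseg : Continuous seg :=
    continuous_polar.comp (f := fun t : I => ((0 : ℝ), ρ t)) (by fun_prop)
  have hang : ∀ t, IsAngle (d (seg t)) (g (seg t)) := fun t => by
    simpa using h.lift.isAngle (isAngle_polar 0 (hρI t))
  let E : I × I → ℂ := fun p =>
    coverMap G D p.1 (-d (seg p.2)) (enorm2 (g (seg p.2))) - coverMap G D p.1 0 (ρ p.2)
  have hE : Continuous E :=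
    (hG.continuous_coverMap.comp (f := fun p : I × I => (p.1, -d (seg p.2), enorm2 (g (seg p.2))))
      (by fun_prop)).sub
    (hG.continuous_coverMap.comp (f := fun p : I × I => (p.1, (0 : ℝ), ρ p.2)) (by fun_prop))
  refine false_of_antiperiodic_homotopy_conj hE (fun p hp => ?_) (fun s => ?_) fun t => ?_
  · obtain ⟨h1, h2⟩ := hG.coverMap_injective (g (seg p.2)).2 (hρI p.2) (sub_eq_zero.1 hp)
    have h3 := hang p.2
    rw [neg_eq_zero.1 h1] at h3
    refine hfix _ (hρ p.2) (h3.eq_of_enorm2_eq (isAngle_polar 0 (hρI p.2)) ?_)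
    rw [h2, enorm2_polar 0 (hρI p.2)]
  · simp [E, seg, ρ, hgr, hgr', hd0, hd0', enorm2_polar, hrI, hr'I]
  · have h1 : polar (-d (seg t)) (enorm2 (g (seg t))) = IA (g (seg t)) := by
      simpa using (hang t).neg.polar_eq
    simp only [E, hG.coverMap_zero _ (g (seg t)).2, hG.coverMap_zero _ (hρI t)]
    simp only [coverMap, h1, hg, hd, h.map_IA_map, h.disp_IA_map, enorm2_IA]
    have h2 : enorm2 (seg t) = ρ t := enorm2_polar 0 (hρI t)
    apply Complex.ext
    · simp [seg]
    · simp [h2]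
      simp [seg]
      ring

lemma conj_IA (h : IsReversibleLift g d) :
    IsReversibleLift (fun z => IA (g (IA z))) fun z => -d (IA z) :=
  ⟨h.lift.conj_IA, fun z => by simp [h.map_IA_map]⟩

lemma iterate (h : IsReversibleLift g d) (n : ℕ) :
    IsReversibleLift g^[n] fun z => ∑ i ∈ Finset.range n, d (g^[i] z) := by
  refine ⟨h.lift.iterate n, ?_⟩
  induction n with
  | zero => exact fun _ => rfl
  | succ n ih =>
    intro z
    rw [Function.iterate_succ_apply, Function.iterate_succ_apply', h.map_IA_map, ih]

lemma add_turns (h : IsReversibleLift g d) (j : ℤ) :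
    IsReversibleLift g fun z => d z + j * (2 * Real.pi) :=
  ⟨h.lift.add_turns j, h.map_IA_map⟩

/-- If the lift moves the middle of the segment of angle `0` to the right, then it maps the right
half of the strip into itself. -/
lemma nonneg_of_disp_pos (h : IsReversibleLift g d)
    (hfix : ∀ r ∈ Ioo (1 : ℝ) 2, g (polar 0 r) ≠ polar 0 r) (hpos : 0 < d (polar 0 (3 / 2)))
    {z : annulus} {x : ℝ} (hx : IsAngle x z) (hx0 : 0 ≤ x) : 0 ≤ x + d z := by
  have hcd := h.lift.continuous_disp
  have hcp := continuous_polar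
  have hmid : (3 / 2 : ℝ) ∈ Ioo (1 : ℝ) 2 := by norm_num
  have hseg : ∀ r ∈ Ioo (1 : ℝ) 2, 0 < d (polar 0 r) := fun r hr => by
    refine pos_of_ne_zero_of_isPreconnected isPreconnected_Ioo
      (φ := fun r => d (polar 0 r)) (Continuous.continuousOn ?_)
      (fun _ hr => h.disp_polar_zero_ne_zero hfix hr) hmid hpos hr
    exact hcd.comp (hcp.comp (f := fun r : ℝ => ((0 : ℝ), r)) (by fun_prop))
  have hright : ∀ p ∈ Ici (0 : ℝ) ×ˢ Ioo (1 : ℝ) 2, 0 < p.1 + d (polar p.1 p.2) := fun p hp => by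
    refine pos_of_ne_zero_of_isPreconnected (isPreconnected_Ici.prod isPreconnected_Ioo)
      (φ := fun p : ℝ × ℝ => p.1 + d (polar p.1 p.2)) (Continuous.continuousOn (by fun_prop))
      ?_ (a := (0, 3 / 2)) ⟨self_mem_Ici, hmid⟩ (by simpa using hpos) hp
    rintro ⟨y, r⟩ ⟨hy : 0 ≤ y, hr⟩ h0
    have hrI := Ioo_subset_Icc_self hr
    have hang := h.lift.isAngle (isAngle_polar y hrI)
    simp only at h0
    rw [h0] at hang
    have hm : (g (polar y r) : ℝ × ℝ) ∈ annulusInt := h.lift.mem_annulusInt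
      (by rw [annulusInt, mem_ofPred_eq, enorm2_polar y hrI]; exact hr)
    have h1 := h.disp_IA_map (polar y r)
    rw [← hang.polar_eq, IA_polar_zero (g (polar y r)).2] at h1
    linarith [hseg _ hm]
  have hclosed : IsClosed {r | 0 ≤ x + d (polar x r)} :=
    isClosed_le continuous_const (continuous_const.add
      (hcd.comp (hcp.comp (f := fun r : ℝ => (x, r)) (by fun_prop))))
  have hmem : enorm2 z ∈ closure (Ioo (1 : ℝ) 2) := by
    rw [closure_Ioo (by norm_num)]
    exact z.2
  have h : 0 ≤ x + d (polar x (enorm2 z)) :=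
    closure_minimal (fun r hr => (hright (x, r) ⟨hx0, hr⟩).le) hclosed hmem
  rwa [hx.polar_eq] at h

lemma nonpos_of_disp_neg (h : IsReversibleLift g d)
    (hfix : ∀ r ∈ Ioo (1 : ℝ) 2, g (polar 0 r) ≠ polar 0 r) (hneg : d (polar 0 (3 / 2)) < 0)
    {z : annulus} {x : ℝ} (hx : IsAngle x z) (hx0 : x ≤ 0) : x + d z ≤ 0 := by
  have hmid : (3 / 2 : ℝ) ∈ Icc (1 : ℝ) 2 := by norm_num
  have := h.conj_IA.nonneg_of_disp_pos (fun r hr hr' => hfix r hr ?_)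
    (by simpa [IA_polar_zero hmid] using hneg) hx.neg (neg_nonneg.2 hx0)
  · simp only [IA_IA] at this
    linarith
  · have hrI := Ioo_subset_Icc_self hr
    simp only [IA_polar_zero hrI] at hr'
    rw [← IA_IA (g (polar 0 r)), hr', IA_polar_zero hrI]

end IsReversibleLift

/-! ### Recurrence -/

lemma IsAngle.annulusArg_eq {x : ℝ} {z : annulus} (h : IsAngle x z)
    (hx : x ∈ Ioc (-Real.pi) Real.pi) : annulusArg z = x := by
  rw [IsAngle, Prod.ext_iff] at h
  rw [← Complex.arg_mul_cos_add_sin_mul_I (enorm2_pos z) hx, annulusArg]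
  congr 1
  apply Complex.ext
  · simpa [← Complex.ofReal_cos, ← Complex.ofReal_sin] using h.2
  · simpa [← Complex.ofReal_cos, ← Complex.ofReal_sin] using h.1

lemma continuous_swap_complex : Continuous fun z : annulus =>
    (⟨(z : ℝ × ℝ).2, (z : ℝ × ℝ).1⟩ : ℂ) :=
  Complex.equivRealProdCLM.symm.continuous.comp
    (f := fun z : annulus => ((z : ℝ × ℝ).2, (z : ℝ × ℝ).1)) (by fun_prop)

lemma measurable_annulusArg : Measurable annulusArg :=
  Complex.measurable_arg.comp continuous_swap_complex.measurable

lemma continuousAt_annulusArg {z : annulus} (hz : 0 < (z : ℝ × ℝ).2) :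
    ContinuousAt annulusArg z :=
  (Complex.continuousAt_arg (Or.inl hz)).comp continuous_swap_complex.continuousAt

lemma measurableSet_annulus : MeasurableSet annulus :=
  ((isClosed_le continuous_const continuous_enorm2).inter
    (isClosed_le continuous_enorm2 continuous_const)).measurableSet

/-- Lebesgue measure on the annulus. -/
abbrev annulusVolume : Measure annulus :=
  (volume : Measure (ℝ × ℝ)).comap (Subtype.val : annulus → ℝ × ℝ)

lemma isFiniteMeasure_annulusVolume : IsFiniteMeasure annulusVolume := by
  refine ⟨?_⟩
  rw [annulusVolume, comap_subtype_coe_apply measurableSet_annulus, image_univ,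
    Subtype.range_coe]
  refine (measure_mono (t := Icc ((-2, -2) : ℝ × ℝ) (2, 2)) fun p hp => ?_).trans_lt
    isCompact_Icc.measure_lt_top
  have h2 : p.1 ^ 2 + p.2 ^ 2 ≤ 2 ^ 2 := (Real.sqrt_le_left (by norm_num)).1 hp.2
  have h3 := abs_le_of_sq_le_sq' (show p.1 ^ 2 ≤ 2 ^ 2 by nlinarith [sq_nonneg p.2]) zero_le_two
  have h4 := abs_le_of_sq_le_sq' (show p.2 ^ 2 ≤ 2 ^ 2 by nlinarith [sq_nonneg p.1]) zero_le_two
  exact ⟨⟨h3.1, h4.1⟩, ⟨h3.2, h4.2⟩⟩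

lemma annulusVolume_ne_zero_of_mem_nhds {U : Set annulus} {z : annulus}
    (hz : (z : ℝ × ℝ) ∈ annulusInt) (hU : U ∈ nhds z) : annulusVolume U ≠ 0 := by
  rw [annulusVolume, comap_subtype_coe_apply measurableSet_annulus]
  have hA : annulus ∈ nhds (z : ℝ × ℝ) :=
    Filter.mem_of_superset (((isOpen_lt continuous_const continuous_enorm2).inter
      (isOpen_lt continuous_enorm2 continuous_const)).mem_nhds hz) fun _ h => ⟨h.1.le, h.2.le⟩
  have := Filter.image_mem_map (m := ((↑) : annulus → ℝ × ℝ)) hU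
  rw [map_nhds_subtype_coe_eq_nhds z.2 hA] at this
  exact (Measure.measure_pos_of_mem_nhds _ this).ne'

/-- An area preserving reversible lift with a fixed point cannot move the middle of the segment of
angle `0` to the right unless some odd iterate has a fixed point inside this segment. -/
lemma IsReversibleLift.false_of_disp_pos {g : annulus → annulus} {d : annulus → ℝ}
    (h : IsReversibleLift g d) (hμ : MeasurePreserving g annulusVolume annulusVolume)
    (hfix : ∀ m, Odd m → ∀ r ∈ Ioo (1 : ℝ) 2, g^[m] (polar 0 r) ≠ polar 0 r)
    {w : annulus} (hw : g w = w) (hdw : d w = 0) (hpos : 0 < d (polar 0 (3 / 2))) : False := by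
  have hcd := h.lift.continuous_disp
  have hmid : (3 / 2 : ℝ) ∈ Ioo (1 : ℝ) 2 := by norm_num
  have hmidI := Ioo_subset_Icc_self hmid
  have hfix1 : ∀ r ∈ Ioo (1 : ℝ) 2, g (polar 0 r) ≠ polar 0 r := hfix 1 odd_one
  let S : ℕ → annulus → ℝ := fun m z => ∑ i ∈ Finset.range m, d (g^[i] z)
  have hS1 : ∀ m z, S (m + 1) z = S m z + d (g^[m] z) := fun m z => Finset.sum_range_succ _ _
  have hSang : ∀ m z x, IsAngle x z → IsAngle (x + S m z) (g^[m] z) :=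
    fun m z x hx => (h.iterate m).lift.isAngle hx
  have hbound : ∀ m, Odd m → ∀ z x, IsAngle x z → x ≤ 0 → x + S m z ≤ 2 * Real.pi := by
    intro m hm z x hx hx0
    have hrev := (h.iterate m).add_turns (-1)
    rcases (hrev.disp_polar_zero_ne_zero (hfix m hm) hmid).lt_or_gt with hneg | hpos'
    · have := hrev.nonpos_of_disp_neg (hfix m hm) hneg hx hx0
      push_cast at this
      linarith
    · obtain ⟨y, hy, hyw⟩ := exists_isAngle_mem_Ico w 0
      have := hrev.nonneg_of_disp_pos (hfix m hm) hpos' hyw hy.1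
      simp only [Function.iterate_fixed hw, hdw, Finset.sum_const_zero] at this
      push_cast at this
      linarith [hy.2]
  have hstep : ∀ z x, IsAngle x z → ∀ j : ℤ, j * (2 * Real.pi) ≤ x →
      j * (2 * Real.pi) ≤ x + d z := by
    intro z x hx j hj
    have := h.nonneg_of_disp_pos hfix1 hpos (hx.add_int (-j)) (by push_cast; linarith)
    push_cast at this
    linarith
  let U : Set annulus := {z | annulusArg z < 0 ∧ 0 < annulusArg z + d z}
  have hU : MeasurableSet U :=
    (measurableSet_lt measurable_annulusArg measurable_const).inter
      (measurableSet_lt measurable_const (measurable_annulusArg.add hcd.measurable))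
  have hU0 : annulusVolume U ≠ 0 := by
    have hcont : Continuous fun t : ℝ => -t + d (polar (-t) (3 / 2)) :=
      continuous_neg.add
        (hcd.comp (continuous_polar.comp (f := fun t : ℝ => (-t, (3 / 2 : ℝ))) (by fun_prop)))
    have hev : ∀ᶠ t in nhds (0 : ℝ), 0 < -t + d (polar (-t) (3 / 2)) :=
      continuous_const.continuousAt.eventually_lt hcont.continuousAt (by simpa using hpos)
    obtain ⟨t, ht, ht0, ht1⟩ := ((hev.filter_mono nhdsWithin_le_nhds).and
      (Ioo_mem_nhdsGT (show (0 : ℝ) < 1 by norm_num))).exists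
    have hpi := Real.pi_gt_three
    have harg : annulusArg (polar (-t) (3 / 2)) = -t :=
      (isAngle_polar (-t) hmidI).annulusArg_eq ⟨by linarith, by linarith⟩
    have hca : ContinuousAt annulusArg (polar (-t) (3 / 2)) := continuousAt_annulusArg (by
      rw [coe_polar _ hmidI]
      have : 0 < Real.cos (-t) := Real.cos_pos_of_mem_Ioo ⟨by linarith, by linarith⟩
      simp only
      linarith)
    refine annulusVolume_ne_zero_of_mem_nhds (z := polar (-t) (3 / 2))
      (by rw [annulusInt, mem_ofPred_eq, enorm2_polar _ hmidI]; exact hmid) ?_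
    refine (hca.eventually_lt continuousAt_const (by rw [harg]; linarith)).and
      (continuousAt_const.eventually_lt (hca.add hcd.continuousAt) ?_)
    rw [harg]
    exact ht
  have := isFiniteMeasure_annulusVolume
  obtain ⟨z, -, hz⟩ :=
    (hμ.conservative.frequently_ae_mem_and_frequently_image_mem hU.nullMeasurableSet hU0).exists
  obtain ⟨y, hy, hyz⟩ := exists_isAngle_mem_Ico z (-(2 * Real.pi))
  have hmono : ∀ j : ℤ, ∀ m, j * (2 * Real.pi) ≤ y + S m z → ∀ m' ≥ m,
      j * (2 * Real.pi) ≤ y + S m' z := by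
    intro j m hm m' hm'
    induction m', hm' using Nat.le_induction with
    | base => exact hm
    | succ k _ ih =>
      have := hstep _ _ (hSang k z y hyz) j ih
      rwa [hS1, ← add_assoc]
  have hgrow : ∀ n : ℕ, ∃ m, ((n - 1 : ℤ) : ℝ) * (2 * Real.pi) ≤ y + S m z := by
    intro n
    induction n with
    | zero => exact ⟨0, by simpa [S] using hy.1⟩
    | succ n ih =>
      obtain ⟨m, hm⟩ := ih
      obtain ⟨m', hm', hmU⟩ := Filter.frequently_atTop.1 hz m
      obtain ⟨j, hj⟩ := (isAngle_annulusArg (g^[m'] z)).exists_int (hSang m' z y hyz)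
      have h1 := hmono _ m hm m' hm'
      refine ⟨m' + 1, ?_⟩
      have h2 : ((n - 1 : ℤ) : ℝ) < j := by
        by_contra! hle
        nlinarith [hmU.1, Real.pi_pos]
      have h3 : (n : ℤ) ≤ j := by
        have : (n - 1 : ℤ) < j := by exact_mod_cast h2
        omega
      have h4 : ((n : ℤ) : ℝ) ≤ j := by exact_mod_cast h3
      rw [hS1]
      push_cast at h4 ⊢
      nlinarith [hmU.2, Real.pi_pos]
  obtain ⟨m, hm⟩ := hgrow 3
  obtain ⟨m', hm', hodd⟩ : ∃ m' ≥ m, Odd m' := by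
    rcases Nat.even_or_odd m with he | ho
    · exact ⟨m + 1, Nat.le_succ m, he.add_one⟩
    · exact ⟨m, le_rfl, ho⟩
  have h1 := hmono _ m hm m' hm'
  have h2 := hbound m' hodd z y hyz (by linarith [hy.2])
  push_cast at h1
  linarith [Real.pi_pos]

/-- **Proposition 5.4.** If an area preserving reversible homeomorphism of the
closed annulus isotopic to the identity has an odd-periodic point, then it has
an interior symmetric odd-periodic point. -/
theorem odd_periodic_point_gives_interior_symmetric_odd_periodic_point
    (f : annulus ≃ₜ annulus)
    (hrev : ∀ z : annulus, f (IA z) = IA (f.symm z))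
    (harea : MeasurePreserving f
      ((volume : Measure (ℝ × ℝ)).comap (Subtype.val : annulus → ℝ × ℝ))
      ((volume : Measure (ℝ × ℝ)).comap (Subtype.val : annulus → ℝ × ℝ)))
    (hiso : IsotopicToId f)
    (hodd : ∃ (z : annulus) (k : ℕ), Odd k ∧ 1 ≤ k ∧ (⇑f)^[k] z = z) :
    ∃ z : annulus, (z : ℝ × ℝ) ∈ annulusInt ∧
      (∃ k : ℕ, Odd k ∧ 1 ≤ k ∧ (⇑f)^[k] z = z) ∧
      (∃ l : ℕ, 1 ≤ l ∧ (⇑f)^[l] z = IA z) := by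
  by_contra hno
  obtain ⟨w, k, hk, -, hkw⟩ := hodd
  obtain ⟨d, hd⟩ := hiso.exists_isLiftPair
  have hf : IsReversibleLift f d := ⟨hd, fun z => by rw [hrev, f.symm_apply_apply]⟩
  have hfk := hf.iterate k
  obtain ⟨x, hx⟩ := exists_isAngle w
  have hxk := hfk.lift.isAngle hx
  rw [hkw] at hxk
  obtain ⟨j, hj⟩ := hx.exists_int hxk
  have hg := hfk.add_turns (-j)
  set e : annulus → ℝ := fun z => (∑ i ∈ Finset.range k, d (f^[i] z)) + (-j : ℤ) * (2 * Real.pi)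
    with he
  have hew : e w = 0 := by
    simp only [he]
    push_cast
    linarith
  have hfix : ∀ m, Odd m → ∀ r ∈ Ioo (1 : ℝ) 2, (f^[k])^[m] (polar 0 r) ≠ polar 0 r := by
    intro m hm r hr heq
    have hrI := Ioo_subset_Icc_self hr
    rw [← Function.iterate_mul] at heq
    refine hno ⟨polar 0 r, ?_, ⟨k * m, hk.mul hm, (hk.mul hm).pos, heq⟩,
      k * m, (hk.mul hm).pos, heq.trans (IA_polar_zero hrI).symm⟩
    rw [annulusInt, mem_ofPred_eq, enorm2_polar 0 hrI]
    exact hr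
  have hmid : (3 / 2 : ℝ) ∈ Ioo (1 : ℝ) 2 := by norm_num
  rcases (hg.disp_polar_zero_ne_zero (hfix 1 odd_one) hmid).lt_or_gt with hneg | hpos
  · have hright : Function.RightInverse (fun z => IA (f^[k] (IA z))) f^[k] := fun z => by
      rw [hg.map_IA_map, IA_IA]
    have hsymm : (fun z => IA (f^[k] (IA z))) = f.symm^[k] := funext fun z =>
      (f.injective.iterate k) ((hright z).trans
        ((Function.RightInverse.iterate f.apply_symm_apply k) z).symm)
    refine hg.conj_IA.false_of_disp_pos (w := IA w) ?_ (fun m hm r hr heq => hfix m hm r hr ?_)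
      (by simp only [IA_IA, hkw]) (by simp only [IA_IA, hew, neg_zero])
      (by simpa [IA_polar_zero (Ioo_subset_Icc_self hmid)] using hneg)
    · rw [hsymm]
      exact (MeasurePreserving.symm f.toMeasurableEquiv harea).iterate k
    · have := Function.RightInverse.iterate hright m (polar 0 r)
      rwa [heq] at this
  · exact hg.false_of_disp_pos (harea.iterate k) hfix hkw hew hpos
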